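/- arXiv:1608.04666 — 2 statements merged into one kernel-verified Lean document; each statement's English description precedes it below -/
import Mathlib

section
/- Let F be a field and k an even integer with k ≥ 4. Then the k×k Jordan block J_k(0) is similar over F to a product N₁N₂ of two nilpotent k×k matrices, where the first row and the last column of N₁ are both zero and the last row of N₂ equals e₁ᵀ (the row vector with a one in the first entry and zeros elsewhere). -/
/-- The `k × k` nilpotent Jordan block `J_k(0)`, with ones on the subdiagonal. -/
def jordanBlock0 (F : Type*) [Field F] (k : ℕ) : Matrix (Fin k) (Fin k) F :=
  Matrix.of fun i j => if (i : ℕ) = (j : ℕ) + 1 then 1 else 0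

open Matrix

/-- The standard basis vector of `Fin k → F` with index `n`, read as `0` when `k ≤ n`. -/
def stdVec (F : Type*) [Field F] (k n : ℕ) : Fin k → F :=
  fun i => if (i : ℕ) = n then 1 else 0

theorem stdVec_of_le {F : Type*} [Field F] {k n : ℕ} (h : k ≤ n) : stdVec F k n = 0 := by
  funext i
  have := i.isLt
  simp only [stdVec, Pi.zero_apply, ite_eq_right_iff]
  omega

theorem stdVec_val {F : Type*} [Field F] {k : ℕ} (j : Fin k) :
    stdVec F k j = Pi.single j 1 := by
  funext i
  simp [stdVec, Pi.single_apply, Fin.ext_iff]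

theorem eq_top_of_stdVec_mem {F : Type*} [Field F] {k : ℕ} (W : Submodule F (Fin k → F))
    (h : ∀ n < k, stdVec F k n ∈ W) : W = ⊤ := by
  rw [eq_top_iff, ← (Pi.basisFun F (Fin k)).span_eq, Submodule.span_le]
  rintro _ ⟨j, rfl⟩
  simpa [stdVec_val] using h j j.isLt

theorem jordanBlock0_mulVec_stdVec (F : Type*) [Field F] (k n : ℕ) :
    jordanBlock0 F k *ᵥ stdVec F k n = stdVec F k (n + 1) := by
  rcases lt_or_ge n k with h | h
  · have := stdVec_val (F := F) ⟨n, h⟩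
    simp only at this
    rw [this, Matrix.mulVec_single_one]
    funext i
    simp [jordanBlock0, stdVec]
  · rw [stdVec_of_le h, stdVec_of_le (h.trans n.le_succ), Matrix.mulVec_zero]

/-- Membership in the nilpotent part of `A` can be checked after applying `A`. -/
theorem mem_maxGenEigenspace_zero_of_mulVec {F : Type*} [Field F] {k : ℕ}
    {A : Matrix (Fin k) (Fin k) F} {x : Fin k → F}
    (h : A *ᵥ x ∈ Module.End.maxGenEigenspace (Matrix.toLin' A) 0) :
    x ∈ Module.End.maxGenEigenspace (Matrix.toLin' A) 0 := by
  rw [Module.End.mem_maxGenEigenspace] at h ⊢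
  obtain ⟨n, hn⟩ := h
  refine ⟨n + 1, ?_⟩
  simpa [pow_succ] using hn

theorem isNilpotent_of_stdVec_mem {F : Type*} [Field F] {k : ℕ} {A : Matrix (Fin k) (Fin k) F}
    (h : ∀ n < k, stdVec F k n ∈ Module.End.maxGenEigenspace (Matrix.toLin' A) 0) :
    IsNilpotent A := by
  have htop := eq_top_of_stdVec_mem _ h
  rw [← Matrix.isNilpotent_toLin'_iff, Module.End.isNilpotent_iff_of_finite]
  intro x
  have hx : x ∈ Module.End.maxGenEigenspace (Matrix.toLin' A) 0 := htop ▸ Submodule.mem_top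
  simpa [Module.End.mem_maxGenEigenspace] using hx

theorem jordanBlock0_isNilpotent (F : Type*) [Field F] (k : ℕ) :
    IsNilpotent (jordanBlock0 F k) := by
  have h (d n : ℕ) (hd : n + d = k) :
      stdVec F k n ∈ Module.End.maxGenEigenspace (Matrix.toLin' (jordanBlock0 F k)) 0 := by
    induction d generalizing n with
    | zero =>
      rw [stdVec_of_le (by omega)]
      exact zero_mem _
    | succ d ih =>
      apply mem_maxGenEigenspace_zero_of_mulVec
      rw [jordanBlock0_mulVec_stdVec]
      exact ih _ (by omega)
  exact isNilpotent_of_stdVec_mem fun n hn => h (k - n) n (by omega)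

/-- A nilpotent matrix whose range together with one vector `v` spans the space is similar to
the nilpotent Jordan block. -/
theorem similar_jordanBlock0_of_isNilpotent {F : Type*} [Field F] {k : ℕ}
    {A : Matrix (Fin k) (Fin k) F} (hA : IsNilpotent A) (v : Fin k → F)
    (hv : Submodule.span F {v} ⊔ LinearMap.range A.mulVecLin = ⊤) :
    ∃ S : Matrix (Fin k) (Fin k) F, IsUnit S ∧ S⁻¹ * jordanBlock0 F k * S = A := by
  have hpow : A ^ k = 0 := by
    have h := (LinearMap.charpoly_eq_X_pow_iff (Matrix.toLin' A)).2 fun m => by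
      obtain ⟨n, hn⟩ := hA
      exact ⟨n, by rw [← Matrix.toLin'_pow, hn]; simp⟩
    have h2 := Matrix.aeval_self_charpoly A
    rw [← Matrix.charpoly_toLin', h] at h2
    simpa using h2
  let T : Matrix (Fin k) (Fin k) F := Matrix.of fun i j => (A ^ (j : ℕ) *ᵥ v) i
  have hcol (j : Fin k) : T *ᵥ Pi.single j 1 = A ^ (j : ℕ) *ᵥ v := by
    rw [Matrix.mulVec_single_one]
    rfl
  have hAT : A * T = T * jordanBlock0 F k := by
    refine Matrix.ext_of_mulVec_single fun j => ?_
    rw [← Matrix.mulVec_mulVec, ← Matrix.mulVec_mulVec, hcol, ← stdVec_val,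
      jordanBlock0_mulVec_stdVec, Matrix.mulVec_mulVec, ← pow_succ']
    rcases Nat.lt_or_ge (j + 1) k with h | h
    · rw [show stdVec F k (j + 1) = Pi.single ⟨j + 1, h⟩ 1 from stdVec_val ⟨j + 1, h⟩, hcol]
    · rw [stdVec_of_le h, Matrix.mulVec_zero, show (j : ℕ) + 1 = k by omega, hpow,
        Matrix.zero_mulVec]
  have hspan (n : ℕ) (hn : n ≤ k) (x : Fin k → F) :
      ∃ c y, x = T *ᵥ c + A ^ n *ᵥ y := by
    induction n with
    | zero => exact ⟨0, x, by simp⟩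
    | succ n ih =>
      obtain ⟨c, y, rfl⟩ := ih (by omega)
      have hy : y ∈ Submodule.span F {v} ⊔ LinearMap.range A.mulVecLin := hv ▸ Submodule.mem_top
      obtain ⟨_, h₁, _, ⟨z, rfl⟩, rfl⟩ := Submodule.mem_sup.1 hy
      obtain ⟨a, rfl⟩ := Submodule.mem_span_singleton.1 h₁
      refine ⟨c + a • Pi.single ⟨n, hn⟩ 1, z, ?_⟩
      rw [Matrix.mulVec_add T, Matrix.mulVec_smul T, hcol, Matrix.mulVecLin_apply,
        Matrix.mulVec_add, Matrix.mulVec_smul, Matrix.mulVec_mulVec, ← pow_succ, add_assoc]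
  have hT : IsUnit T := by
    rw [← Matrix.mulVec_surjective_iff_isUnit]
    intro x
    obtain ⟨c, y, h⟩ := hspan k le_rfl x
    exact ⟨c, by rw [h, hpow, Matrix.zero_mulVec, add_zero]⟩
  have hdet : IsUnit T.det := (Matrix.isUnit_iff_isUnit_det T).1 hT
  refine ⟨T⁻¹, (Matrix.isUnit_nonsing_inv_iff).2 hT, ?_⟩
  rw [Matrix.nonsing_inv_nonsing_inv T hdet, ← hAT, Matrix.mul_assoc, Matrix.mul_nonsing_inv T hdet,
    Matrix.mul_one]

/-- The matrix `N` with `N e₀ = e₂ + e_{k-1}`, `N e₁ = e₃`, `N e₂ = e₀`, `N e_{k-1} = e₁ - e₀` and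
`N e_j = e_{j+1}` for `3 ≤ j < k - 1`, except that the images of `e₁` and `e_{k-2}` are replaced
by `0` if they would be `e_{k-1}`. -/
def rightFactor (F : Type*) [Field F] (k : ℕ) : Matrix (Fin k) (Fin k) F :=
  Matrix.of fun i j =>
    (if (j : ℕ) = 0 then stdVec F k 2 + stdVec F k (k - 1)
    else if (j : ℕ) = 1 then (if 3 < k - 1 then stdVec F k 3 else 0)
    else if (j : ℕ) = 2 then stdVec F k 0
    else if (j : ℕ) = k - 1 then stdVec F k 1 - stdVec F k 0
    else if (j : ℕ) + 1 < k - 1 then stdVec F k (j + 1) else 0) i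

theorem rightFactor_mulVec_stdVec (F : Type*) [Field F] {k n : ℕ} (hn : n < k) :
    rightFactor F k *ᵥ stdVec F k n =
      if n = 0 then stdVec F k 2 + stdVec F k (k - 1)
      else if n = 1 then (if 3 < k - 1 then stdVec F k 3 else 0)
      else if n = 2 then stdVec F k 0
      else if n = k - 1 then stdVec F k 1 - stdVec F k 0
      else if n + 1 < k - 1 then stdVec F k (n + 1) else 0 := by
  rw [show stdVec F k n = Pi.single ⟨n, hn⟩ 1 from stdVec_val ⟨n, hn⟩, Matrix.mulVec_single_one]
  rfl

theorem rightFactor_isNilpotent (F : Type*) [Field F] {k : ℕ} (hk : 4 ≤ k) :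
    IsNilpotent (rightFactor F k) := by
  set K := Module.End.maxGenEigenspace (Matrix.toLin' (rightFactor F k)) 0
  have step {x : Fin k → F} (h : rightFactor F k *ᵥ x ∈ K) : x ∈ K :=
    mem_maxGenEigenspace_zero_of_mulVec h
  have col {n : ℕ} (hn : n < k) := rightFactor_mulVec_stdVec F hn
  have hmid (d n : ℕ) (h3 : 3 ≤ n) (hd : n + d = k - 2) : stdVec F k n ∈ K := by
    induction d generalizing n with
    | zero =>
      apply step
      rw [col (by omega), if_neg (by omega), if_neg (by omega), if_neg (by omega),
        if_neg (by omega), if_neg (by omega)]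
      exact zero_mem _
    | succ d ih =>
      apply step
      rw [col (by omega), if_neg (by omega), if_neg (by omega), if_neg (by omega),
        if_neg (by omega), if_pos (by omega)]
      exact ih _ (by omega) (by omega)
  have h1 : stdVec F k 1 ∈ K := by
    apply step
    rw [col (by omega), if_neg (by omega), if_pos rfl]
    split_ifs with h
    · exact hmid (k - 5) 3 le_rfl (by omega)
    · exact zero_mem _
  have hsum : stdVec F k 2 + stdVec F k (k - 1) ∈ K := by
    apply step
    rw [Matrix.mulVec_add, col (by omega), col (by omega), if_neg (by omega), if_neg (by omega),
      if_pos rfl, if_neg (by omega), if_neg (by omega), if_neg (by omega), if_pos rfl,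
      add_sub_cancel]
    exact h1
  have h0 : stdVec F k 0 ∈ K := by
    apply step
    rw [col (by omega), if_pos rfl]
    exact hsum
  have h2 : stdVec F k 2 ∈ K := by
    apply step
    rw [col (by omega), if_neg (by omega), if_neg (by omega), if_pos rfl]
    exact h0
  have hlast : stdVec F k (k - 1) ∈ K := (Submodule.add_mem_iff_right _ h2).1 hsum
  refine isNilpotent_of_stdVec_mem fun n hn => ?_
  obtain rfl | rfl | rfl | rfl | h : n = 0 ∨ n = 1 ∨ n = 2 ∨ n = k - 1 ∨ 3 ≤ n ∧ n ≤ k - 2 := by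
    omega
  · exact h0
  · exact h1
  · exact h2
  · exact hlast
  · exact hmid (k - 2 - n) n h.1 (by omega)

theorem product_mulVec_stdVec (F : Type*) [Field F] {k n : ℕ} (hk : 4 ≤ k) (hn : n < k) :
    (jordanBlock0 F k * rightFactor F k) *ᵥ stdVec F k n =
      if n = 0 then stdVec F k 3
      else if n = 1 then stdVec F k 4
      else if n = 2 then stdVec F k 1
      else if n = k - 1 then stdVec F k 2 - stdVec F k 1
      else stdVec F k (n + 2) := by
  rw [← Matrix.mulVec_mulVec, rightFactor_mulVec_stdVec F hn]
  split_ifs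
  · rw [Matrix.mulVec_add, jordanBlock0_mulVec_stdVec, jordanBlock0_mulVec_stdVec,
      stdVec_of_le (n := k - 1 + 1) (by omega), add_zero]
  · rw [jordanBlock0_mulVec_stdVec]
  · rw [Matrix.mulVec_zero, stdVec_of_le (by omega)]
  · rw [jordanBlock0_mulVec_stdVec]
  · rw [Matrix.mulVec_sub, jordanBlock0_mulVec_stdVec, jordanBlock0_mulVec_stdVec]
  · rw [jordanBlock0_mulVec_stdVec]
  · rw [Matrix.mulVec_zero, stdVec_of_le (by omega)]

theorem product_isNilpotent (F : Type*) [Field F] {k : ℕ} (hk : 4 ≤ k) (heven : Even k) :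
    IsNilpotent (jordanBlock0 F k * rightFactor F k) := by
  set K := Module.End.maxGenEigenspace (Matrix.toLin' (jordanBlock0 F k * rightFactor F k)) 0
  have step {x : Fin k → F} (h : (jordanBlock0 F k * rightFactor F k) *ᵥ x ∈ K) : x ∈ K :=
    mem_maxGenEigenspace_zero_of_mulVec h
  have col {n : ℕ} (hn : n < k) := product_mulVec_stdVec F hk hn
  have hev (d n : ℕ) (h4 : 4 ≤ n) (hd : n + 2 * d = k) : stdVec F k n ∈ K := by
    induction d generalizing n with
    | zero =>
      rw [stdVec_of_le (by omega)]
      exact zero_mem _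
    | succ d ih =>
      apply step
      rw [col (by omega), if_neg (by omega), if_neg (by omega), if_neg (by omega),
        if_neg (by omega)]
      exact ih _ (by omega) (by omega)
  obtain ⟨m, hm⟩ := heven
  have h1 : stdVec F k 1 ∈ K := by
    apply step
    rw [col (by omega), if_neg (by omega), if_pos rfl]
    exact hev (m - 2) 4 le_rfl (by omega)
  have h2 : stdVec F k 2 ∈ K := by
    apply step
    rw [col (by omega), if_neg (by omega), if_neg (by omega), if_pos rfl]
    exact h1
  have hodd (d n : ℕ) (h3 : 3 ≤ n) (hd : n + 2 * d = k - 1) : stdVec F k n ∈ K := by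
    induction d generalizing n with
    | zero =>
      apply step
      rw [col (by omega), if_neg (by omega), if_neg (by omega), if_neg (by omega),
        if_pos (by omega)]
      exact sub_mem h2 h1
    | succ d ih =>
      apply step
      rw [col (by omega), if_neg (by omega), if_neg (by omega), if_neg (by omega),
        if_neg (by omega)]
      exact ih _ (by omega) (by omega)
  have h0 : stdVec F k 0 ∈ K := by
    apply step
    rw [col (by omega), if_pos rfl]
    exact hodd (m - 2) 3 le_rfl (by omega)
  refine isNilpotent_of_stdVec_mem fun n hn => ?_
  obtain rfl | rfl | rfl | h3 : n = 0 ∨ n = 1 ∨ n = 2 ∨ 3 ≤ n := by omega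
  · exact h0
  · exact h1
  · exact h2
  · obtain ⟨c, hc⟩ | ⟨c, hc⟩ := Nat.even_or_odd n
    · exact hev (m - c) n (by omega) (by omega)
    · exact hodd (m - 1 - c) n h3 (by omega)

theorem span_sup_range_product_eq_top (F : Type*) [Field F] {k : ℕ} (hk : 4 ≤ k) :
    Submodule.span F {stdVec F k 0} ⊔
      LinearMap.range (jordanBlock0 F k * rightFactor F k).mulVecLin = ⊤ := by
  set W := Submodule.span F {stdVec F k 0} ⊔
    LinearMap.range (jordanBlock0 F k * rightFactor F k).mulVecLin
  have col {n : ℕ} (hn : n < k) := product_mulVec_stdVec F hk hn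
  have image (x : Fin k → F) : (jordanBlock0 F k * rightFactor F k) *ᵥ x ∈ W :=
    Submodule.mem_sup_right ⟨x, rfl⟩
  have h1 : stdVec F k 1 ∈ W := by
    have h := image (stdVec F k 2)
    rwa [col (by omega), if_neg (by omega), if_neg (by omega), if_pos rfl] at h
  refine eq_top_of_stdVec_mem _ fun n hn => ?_
  obtain rfl | rfl | rfl | rfl | rfl | h5 :
      n = 0 ∨ n = 1 ∨ n = 2 ∨ n = 3 ∨ n = 4 ∨ 5 ≤ n := by omega
  · exact Submodule.mem_sup_left (Submodule.mem_span_singleton_self _)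
  · exact h1
  · have h := image (stdVec F k (k - 1))
    rw [col (by omega), if_neg (by omega), if_neg (by omega), if_neg (by omega), if_pos rfl] at h
    exact (Submodule.sub_mem_iff_left _ h1).1 h
  · have h := image (stdVec F k 0)
    rwa [col (by omega), if_pos rfl] at h
  · have h := image (stdVec F k 1)
    rwa [col (by omega), if_neg (by omega), if_pos rfl] at h
  · have h := image (stdVec F k (n - 2))
    rwa [col (by omega), if_neg (by omega), if_neg (by omega), if_neg (by omega),
      if_neg (by omega), Nat.sub_add_cancel (by omega)] at h

theorem rightFactor_last_row (F : Type*) [Field F] {k : ℕ} (hk : 4 ≤ k) {i : Fin k}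
    (hi : (i : ℕ) = k - 1) (j : Fin k) : rightFactor F k i j = if (j : ℕ) = 0 then 1 else 0 := by
  simp only [rightFactor, Matrix.of_apply]
  have h0 : k - 1 ≠ 0 := by omega
  have h1 : k - 1 ≠ 1 := by omega
  have h2 : k - 1 ≠ 2 := by omega
  split_ifs <;> simp [stdVec, hi, h0, h1, h2] <;> omega


/-- For even `k ≥ 4`, the Jordan block `J_k(0)` is similar to a product `N₁ * N₂` of two
nilpotent matrices, where the first row and last column of `N₁` are zero and the last
row of `N₂` equals `e₁ᵀ`. -/
theorem jordan_block_even_similar_to_structured_product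
    (F : Type*) [Field F] (k : ℕ) (hk : 4 ≤ k) (heven : Even k) :
    ∃ (N₁ N₂ S : Matrix (Fin k) (Fin k) F),
      IsNilpotent N₁ ∧ IsNilpotent N₂ ∧
      IsUnit S ∧ S⁻¹ * jordanBlock0 F k * S = N₁ * N₂ ∧
      (∀ j, N₁ ⟨0, by omega⟩ j = 0) ∧
      (∀ i, N₁ i ⟨k - 1, by omega⟩ = 0) ∧
      (∀ j : Fin k, N₂ ⟨k - 1, by omega⟩ j = if (j : ℕ) = 0 then 1 else 0) := by
  obtain ⟨S, hS, hSJ⟩ := similar_jordanBlock0_of_isNilpotent (product_isNilpotent F hk heven)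
    (stdVec F k 0) (span_sup_range_product_eq_top F hk)
  refine ⟨jordanBlock0 F k, rightFactor F k, S, jordanBlock0_isNilpotent F k,
    rightFactor_isNilpotent F hk, hS, hSJ, fun j => ?_, fun i => ?_, rightFactor_last_row F hk rfl⟩
  · simp [jordanBlock0]
  · have := i.isLt
    simp only [jordanBlock0, Matrix.of_apply, ite_eq_right_iff]
    omega
end

section
/- Let F be a field and k an even integer with k ≥ 2. Then the (k+2)×(k+2) block diagonal matrix Dg[J_k(0), J_2(0)] is a product N₁N₂ of two nilpotent (k+2)×(k+2) matrices over F, where the first row and the last column of N₁ are both zero and the last row of N₂ is zero. -/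
/-- A square matrix whose nonzero entries strictly decrease a rank function from row to column
is nilpotent. -/
theorem Matrix.isNilpotent_of_rank_lt {n R : Type*} [Fintype n] [DecidableEq n] [Semiring R]
    (r : n → ℕ) (N : Matrix n n R) (h : ∀ i j, r i ≤ r j → N i j = 0) : IsNilpotent N := by
  have key : ∀ (m : ℕ) (i j : n), r i < r j + m → (N ^ m) i j = 0 := by
    intro m
    induction m with
    | zero =>
      intro i j hij
      rw [pow_zero, Matrix.one_apply_ne]
      rintro rfl
      omega
    | succ m ih =>
      intro i j hij
      rw [pow_succ, Matrix.mul_apply]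
      refine Finset.sum_eq_zero fun l _ => ?_
      rcases le_or_gt (r l) (r j) with hl | hl
      · rw [h l j hl, mul_zero]
      · rw [ih i l (by omega), zero_mul]
  refine ⟨∑ i, r i + 1, ?_⟩
  ext i j
  refine key _ i j ?_
  have := Finset.single_le_sum (f := r) (fun _ _ => Nat.zero_le _) (Finset.mem_univ i)
  omega

/-- The left factor, sending basis vectors along `k → ⋯ → 4 → 2 → 1 → 3 → ⋯ → k + 1`. -/
def jordanLeftFactor (F : Type*) [Field F] (k : ℕ) : Matrix (Fin (k + 2)) (Fin (k + 2)) F :=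
  Matrix.of fun i j =>
    if ((j : ℕ) % 2 = 1 ∧ (i : ℕ) = j + 2) ∨
      ((j : ℕ) % 2 = 0 ∧ 4 ≤ (j : ℕ) ∧ (i : ℕ) + 2 = j) ∨ ((j : ℕ) = 2 ∧ (i : ℕ) = 1)
    then 1 else 0

/-- The right factor, sending basis vectors along `0 → 2 → 1 → 4 → 3 → ⋯ → k → k - 1`. -/
def jordanRightFactor (F : Type*) [Field F] (k : ℕ) : Matrix (Fin (k + 2)) (Fin (k + 2)) F :=
  Matrix.of fun i j =>
    if ((j : ℕ) = 0 ∧ (i : ℕ) = 2) ∨ ((j : ℕ) % 2 = 1 ∧ (i : ℕ) = j + 3) ∨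
      ((j : ℕ) % 2 = 0 ∧ 2 ≤ (j : ℕ) ∧ (i : ℕ) + 1 = j)
    then 1 else 0

theorem isNilpotent_jordanLeftFactor (F : Type*) [Field F] (k : ℕ) :
    IsNilpotent (jordanLeftFactor F k) := by
  refine Matrix.isNilpotent_of_rank_lt
    (fun i : Fin (k + 2) => if (i : ℕ) % 2 = 0 then k + 2 - i else k + 2 + i) _ fun i j hij => ?_
  simp only [jordanLeftFactor, Matrix.of_apply]
  have := i.isLt
  have := j.isLt
  refine if_neg ?_
  split_ifs at hij <;> omega

theorem isNilpotent_jordanRightFactor (F : Type*) [Field F] (k : ℕ) :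
    IsNilpotent (jordanRightFactor F k) := by
  refine Matrix.isNilpotent_of_rank_lt
    (fun i : Fin (k + 2) => if (i : ℕ) % 2 = 0 then (i : ℕ) else i + 2) _ fun i j hij => ?_
  simp only [jordanRightFactor, Matrix.of_apply]
  refine if_neg ?_
  split_ifs at hij <;> omega

theorem jordanLeftFactor_mul_jordanRightFactor_apply (F : Type*) [Field F] (k : ℕ)
    (hk : 2 ≤ k) (heven : Even k) (i j : Fin (k + 2)) :
    (jordanLeftFactor F k * jordanRightFactor F k) i j =
      if (i : ℕ) = j + 1 ∧ (i : ℕ) ≠ k then 1 else 0 := by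
  have hi := i.isLt
  have hj := j.isLt
  rw [Nat.even_iff] at heven
  rw [Matrix.mul_apply]
  simp only [jordanLeftFactor, jordanRightFactor, Matrix.of_apply, ← ite_and, mul_ite, mul_one,
    mul_zero]
  by_cases hzero : (j : ℕ) % 2 = 1 ∧ k ≤ (j : ℕ) + 1
  · rw [if_neg (by omega)]
    exact Finset.sum_eq_zero fun l _ => if_neg (by have := l.isLt; omega)
  · obtain ⟨l, hl⟩ : ∃ l : Fin (k + 2), ((j : ℕ) = 0 ∧ (l : ℕ) = 2) ∨
        ((j : ℕ) % 2 = 1 ∧ (l : ℕ) = j + 3) ∨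
        ((j : ℕ) % 2 = 0 ∧ 2 ≤ (j : ℕ) ∧ (l : ℕ) + 1 = j) := by
      by_cases h0 : (j : ℕ) = 0
      · exact ⟨⟨2, by omega⟩, by simp [h0]⟩
      · by_cases h1 : (j : ℕ) % 2 = 1
        · exact ⟨⟨j + 3, by omega⟩, by simp [h1]⟩
        · exact ⟨⟨j - 1, by omega⟩, by dsimp only; omega⟩
    rw [Finset.sum_eq_single l]
    · exact if_congr (by omega) rfl rfl
    · intro m _ hm
      rw [Ne, Fin.ext_iff] at hm
      exact if_neg (by omega)
    · simp

theorem reindex_fromBlocks_jordanBlock0_apply (F : Type*) [Field F] (k : ℕ)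
    (i j : Fin (k + 2)) :
    Matrix.reindex finSumFinEquiv finSumFinEquiv
        (Matrix.fromBlocks (jordanBlock0 F k) 0 0 (jordanBlock0 F 2)) i j =
      if (i : ℕ) = j + 1 ∧ (i : ℕ) ≠ k then 1 else 0 := by
  obtain ⟨i, rfl⟩ := finSumFinEquiv.surjective i
  obtain ⟨j, rfl⟩ := finSumFinEquiv.surjective j
  rw [Matrix.reindex_apply, Matrix.submatrix_apply, Equiv.symm_apply_apply,
    Equiv.symm_apply_apply]
  rcases i with i | i <;> rcases j with j | j <;>
    simp only [Matrix.fromBlocks_apply₁₁, Matrix.fromBlocks_apply₁₂, Matrix.fromBlocks_apply₂₁,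
      Matrix.fromBlocks_apply₂₂, finSumFinEquiv_apply_left, finSumFinEquiv_apply_right,
      Fin.val_castAdd, Fin.val_natAdd, jordanBlock0, Matrix.of_apply, Matrix.zero_apply]
  · exact if_congr (by omega) rfl rfl
  · exact (if_neg (by omega)).symm
  · exact (if_neg (by omega)).symm
  · exact if_congr (by omega) rfl rfl

/-- For even `k ≥ 2`, the block diagonal matrix `Dg[J_k(0), J_2(0)]` is a product
`N₁ * N₂` of two nilpotent matrices, where the first row and last column of `N₁` are
zero and the last row of `N₂` is zero. -/
theorem jordan_k_2_even_structured_product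
    (F : Type*) [Field F] (k : ℕ) (hk : 2 ≤ k) (heven : Even k) :
    ∃ N₁ N₂ : Matrix (Fin (k + 2)) (Fin (k + 2)) F,
      IsNilpotent N₁ ∧ IsNilpotent N₂ ∧
      Matrix.reindex finSumFinEquiv finSumFinEquiv
          (Matrix.fromBlocks (jordanBlock0 F k) 0 0 (jordanBlock0 F 2)) = N₁ * N₂ ∧
      (∀ j, N₁ ⟨0, by omega⟩ j = 0) ∧
      (∀ i, N₁ i ⟨k + 1, by omega⟩ = 0) ∧
      (∀ j, N₂ ⟨k + 1, by omega⟩ j = 0) := by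
  refine ⟨jordanLeftFactor F k, jordanRightFactor F k, isNilpotent_jordanLeftFactor F k,
    isNilpotent_jordanRightFactor F k, ?_, fun j => ?_, fun i => ?_, fun j => ?_⟩
  · ext i j
    rw [reindex_fromBlocks_jordanBlock0_apply,
      jordanLeftFactor_mul_jordanRightFactor_apply F k hk heven]
  · simp only [jordanLeftFactor, Matrix.of_apply]
    exact if_neg (by omega)
  · simp only [jordanLeftFactor, Matrix.of_apply]
    rw [Nat.even_iff] at heven
    exact if_neg (by omega)
  · simp only [jordanRightFactor, Matrix.of_apply]
    rw [Nat.even_iff] at heven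
    exact if_neg (by omega)
end
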